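/- Let d ≥ 1, let f, g : ℝ^d → ℝ^d satisfy f(0) = g(0) = 0 and the local Lipschitz condition with nondecreasing constants L_R, let p ∈ (0,1) and λ > 0 be such that Φ_{f,g}(x) ≤ −λ for all x ≠ 0, and let h : (0,Δ₀] → (0,∞) be decreasing with h(Δ) → ∞ and L_{h(Δ)}⁴·Δ → 0 as Δ → 0⁺. Then for every ε ∈ (0,λ) there exists Δ* ∈ (0,Δ₀] such that for every Δ ∈ (0,Δ*) and every initial value x₀ ∈ ℝ^d, the modified truncated Euler–Maruyama scheme X₀ = x₀, X_{k+1} = X_k + f_{h(Δ)}(X_k)·Δ + g_{h(Δ)}(X_k)·ξ_k driven by i.i.d. real Gaussian random variables ξ₀, ξ₁, … with mean 0 and variance Δ satisfies, for all k ≥ 0, E|X_k|^p ≤ |x₀|^p·(1 − p(λ−ε)Δ)^k ≤ |x₀|^p·e^{−p(λ−ε)kΔ}. -/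

import Mathlib

open Set Filter MeasureTheory ProbabilityTheory
open scoped RealInnerProductSpace ENNReal

/-- The modified truncated function `f_h`. -/
noncomputable def trunc {d : ℕ} (f : EuclideanSpace ℝ (Fin d) → EuclideanSpace ℝ (Fin d))
    (h : ℝ) (x : EuclideanSpace ℝ (Fin d)) : EuclideanSpace ℝ (Fin d) :=
  if ‖x‖ ≤ h then f x else (‖x‖ / h) • f ((h / ‖x‖) • x)

/-- The dissipativity functional `Φ_{f,g}`. -/
noncomputable def Phi {d : ℕ} (f g : EuclideanSpace ℝ (Fin d) → EuclideanSpace ℝ (Fin d))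
    (p : ℝ) (x : EuclideanSpace ℝ (Fin d)) : ℝ :=
  (⟪x, f x⟫ + (1 / 2) * ‖g x‖ ^ 2) / ‖x‖ ^ 2 + ((p - 2) / 2) * ⟪x, g x⟫ ^ 2 / ‖x‖ ^ 4

/-!
Along one Euler step the increment `Y` of `‖·‖ ^ 2` is a quadratic polynomial in the Gaussian noise,
and `(1 + Y) ^ (p / 2)` lies below its cubic Taylor polynomial at `Y = 0`. Gaussian moments give
`E ‖x + Δ a + ξ b‖ ^ p ≤ (1 + p Δ Φ + O(Δ² K²)) ‖x‖ ^ p` at a unit vector `x` with `‖a‖, ‖b‖² ≤ K`,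
and at every `x ≠ 0` by homogeneity. Truncation extends `f` and `g` radially with degree one,
so it preserves both the bound on the degree-zero functional `Φ` and linear growth. With
`K = 1 + L (h Δ) ^ 2` the error `O(Δ² K²)` is `o(Δ)`, and since `X k` is independent of `ξ k` the
one-step contraction can be iterated.
-/

open scoped NNReal Topology

section RpowTaylor

lemma one_add_mul_self_le_rpow_one_add_of_nonpos {s r : ℝ} (hs : -1 < s) (hr : r ≤ 0) :
    1 + r * s ≤ (1 + s) ^ r := by
  have hlog : Real.log (1 + s) ≤ s := by
    linarith [Real.log_le_sub_one_of_pos (show 0 < 1 + s by linarith)]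
  calc 1 + r * s ≤ Real.log (1 + s) * r + 1 := by
        linarith [mul_le_mul_of_nonpos_right hlog hr]
    _ ≤ Real.exp (Real.log (1 + s) * r) := Real.add_one_le_exp _
    _ = (1 + s) ^ r := (Real.rpow_def_of_pos (by linarith) r).symm

/-- The remainder `T₃(s) - (1 + s) ^ q` of the cubic Taylor polynomial of `(1 + s) ^ q` at `0`. -/
noncomputable def cubicRemainder (q s : ℝ) : ℝ :=
  1 + q * s + q * (q - 1) / 2 * s ^ 2 + q * (q - 1) * (q - 2) / 6 * s ^ 3 - (1 + s) ^ q

lemma hasDerivAt_cubicRemainder (q : ℝ) {s : ℝ} (hs : -1 < s) :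
    HasDerivAt (cubicRemainder q)
      (q + q * (q - 1) * s + q * (q - 1) * (q - 2) / 2 * s ^ 2 - q * (1 + s) ^ (q - 1)) s := by
  have hrpow := ((hasDerivAt_id s).const_add 1).rpow_const (p := q)
    (Or.inl (by simpa using by linarith))
  refine HasDerivAt.congr_deriv (((((hasDerivAt_id s).const_mul q).const_add 1).add
    ((hasDerivAt_pow 2 s).const_mul (q * (q - 1) / 2)) |>.add
    ((hasDerivAt_pow 3 s).const_mul (q * (q - 1) * (q - 2) / 6))).sub hrpow) ?_
  simp only [id]
  push_cast
  ring

lemma hasDerivAt_deriv_cubicRemainder (q : ℝ) {s : ℝ} (hs : -1 < s) :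
    HasDerivAt (fun s => q + q * (q - 1) * s + q * (q - 1) * (q - 2) / 2 * s ^ 2
        - q * (1 + s) ^ (q - 1))
      (q * (1 - q) * ((1 + s) ^ (q - 2) - (1 + (q - 2) * s))) s := by
  have hrpow := ((hasDerivAt_id s).const_add 1).rpow_const (p := q - 1)
    (Or.inl (by simpa using by linarith))
  refine HasDerivAt.congr_deriv (((((hasDerivAt_id s).const_mul (q * (q - 1))).const_add q).add
    ((hasDerivAt_pow 2 s).const_mul (q * (q - 1) * (q - 2) / 2))).sub (hrpow.const_mul q)) ?_
  simp only [id, show q - 1 - 1 = q - 2 by ring]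
  push_cast
  ring

lemma convexOn_cubicRemainder {q : ℝ} (hq : q ∈ Icc (0 : ℝ) 1) :
    ConvexOn ℝ (Ici (-1)) (cubicRemainder q) := by
  refine convexOn_of_hasDerivWithinAt2_nonneg (convex_Ici (-1)) ?_
    (fun s hs => (hasDerivAt_cubicRemainder q (by simpa using hs)).hasDerivWithinAt)
    (fun s hs => (hasDerivAt_deriv_cubicRemainder q (by simpa using hs)).hasDerivWithinAt) ?_
  · have hrpow : Continuous fun s : ℝ => (1 + s) ^ q :=
      (Real.continuous_rpow_const hq.1).comp (by fun_prop)
    unfold cubicRemainder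
    fun_prop
  · intro s hs
    rw [interior_Ici] at hs
    have hbern := one_add_mul_self_le_rpow_one_add_of_nonpos hs (r := q - 2) (by linarith [hq.2])
    exact mul_nonneg (mul_nonneg hq.1 (sub_nonneg.2 hq.2)) (sub_nonneg.2 hbern)

-- The remainder is convex with a critical point at `0`, where it vanishes.
lemma rpow_one_add_le_cubic {q s : ℝ} (hq : q ∈ Icc (0 : ℝ) 1) (hs : -1 ≤ s) :
    (1 + s) ^ q ≤ 1 + q * s + q * (q - 1) / 2 * s ^ 2 + q * (q - 1) * (q - 2) / 6 * s ^ 3 := by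
  have hderiv : HasDerivAt (cubicRemainder q) 0 0 := by
    simpa using hasDerivAt_cubicRemainder q (s := 0) (by norm_num)
  have hmin : IsMinOn (cubicRemainder q) (Ici (-1)) 0 :=
    (convexOn_cubicRemainder hq).isMinOn_of_rightDeriv_eq_zero (by simp)
      (hderiv.hasDerivWithinAt.derivWithin (uniqueDiffWithinAt_Ioi 0))
  have hzero : cubicRemainder q 0 = 0 := by simp [cubicRemainder]
  have hnonneg : 0 ≤ cubicRemainder q s := hzero ▸ hmin hs
  exact sub_nonneg.1 hnonneg

lemma lintegral_rpow_one_add_le {α : Type*} [MeasurableSpace α] {μ : Measure α}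
    [IsProbabilityMeasure μ] {q : ℝ} (hq : q ∈ Icc (0 : ℝ) 1) {Y : α → ℝ} (hY : ∀ z, -1 ≤ Y z)
    (hint : Integrable Y μ) (hint_sq : Integrable (fun z => Y z ^ 2) μ)
    (hint_cube : Integrable (fun z => Y z ^ 3) μ) :
    ∫⁻ z, ENNReal.ofReal ((1 + Y z) ^ q) ∂μ ≤
      ENNReal.ofReal (1 + q * ∫ z, Y z ∂μ + q * (q - 1) / 2 * ∫ z, Y z ^ 2 ∂μ
        + q * (q - 1) * (q - 2) / 6 * ∫ z, Y z ^ 3 ∂μ) := by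
  have hlin := (integrable_const (μ := μ) (1 : ℝ)).fun_add (hint.const_mul q)
  have hquad := hlin.fun_add (hint_sq.const_mul (q * (q - 1) / 2))
  have hterm_cube := hint_cube.const_mul (q * (q - 1) * (q - 2) / 6)
  calc ∫⁻ z, ENNReal.ofReal ((1 + Y z) ^ q) ∂μ
      ≤ ∫⁻ z, ENNReal.ofReal (1 + q * Y z + q * (q - 1) / 2 * Y z ^ 2
          + q * (q - 1) * (q - 2) / 6 * Y z ^ 3) ∂μ :=
        lintegral_mono fun z => ENNReal.ofReal_le_ofReal (rpow_one_add_le_cubic hq (hY z))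
    _ = ENNReal.ofReal (∫ z, (1 + q * Y z + q * (q - 1) / 2 * Y z ^ 2
          + q * (q - 1) * (q - 2) / 6 * Y z ^ 3) ∂μ) :=
        (ofReal_integral_eq_lintegral_ofReal (hquad.fun_add hterm_cube) <| .of_forall fun z =>
          (Real.rpow_nonneg (by linarith [hY z]) q).trans (rpow_one_add_le_cubic hq (hY z))).symm
    _ = _ := by
        rw [integral_add hquad hterm_cube, integral_add hlin (hint_sq.const_mul _),
          integral_add (integrable_const _) (hint.const_mul q)]
        simp only [integral_const_mul, integral_const, probReal_univ, smul_eq_mul, one_mul]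

end RpowTaylor

section GaussianMoments

lemma integral_pow_gaussianReal_eq_iteratedDeriv (v : ℝ≥0) (n : ℕ) :
    ∫ z, z ^ n ∂gaussianReal 0 v = iteratedDeriv n (fun t => Real.exp (v * t ^ 2 / 2)) 0 := by
  have hmgf := iteratedDeriv_mgf_zero (X := fun z : ℝ => z) (μ := gaussianReal 0 v) (by simp) n
  simpa [mgf_fun_id_gaussianReal] using hmgf.symm

-- The moment generating function `M` satisfies `dM/dt = v * t * M`; differentiate `n + 1` times.
lemma integral_pow_add_two_gaussianReal (v : ℝ≥0) (n : ℕ) :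
    ∫ z, z ^ (n + 2) ∂gaussianReal 0 v = (n + 1) * v * ∫ z, z ^ n ∂gaussianReal 0 v := by
  have hderiv : deriv (fun t : ℝ => Real.exp (v * t ^ 2 / 2))
      = fun t => v * (t ^ 1 * Real.exp (v * t ^ 2 / 2)) := by
    ext t
    refine (HasDerivAt.congr_deriv
      (((hasDerivAt_pow 2 t).const_mul (v : ℝ)).div_const 2).exp ?_).deriv
    push_cast
    ring
  rw [integral_pow_gaussianReal_eq_iteratedDeriv, integral_pow_gaussianReal_eq_iteratedDeriv,
    iteratedDeriv_succ', hderiv, iteratedDeriv_const_mul_field,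
    iteratedDeriv_fun_mul (by fun_prop) (by fun_prop), Finset.sum_eq_single 1]
  · rw [iteratedDeriv_fun_pow_zero]
    simp only [Nat.choose_one_right, Nat.cast_add, Nat.cast_one, if_true, Nat.factorial_one,
      mul_one, add_tsub_cancel_right]
    ring
  · intro i _ hi
    simp only [iteratedDeriv_fun_pow_zero, hi, if_false, Nat.cast_zero, mul_zero, zero_mul]
  · simp

lemma integrable_pow_gaussianReal (m : ℝ) (v : ℝ≥0) (n : ℕ) :
    Integrable (fun z : ℝ => z ^ n) (gaussianReal m v) := by
  rw [← integrable_norm_iff (by fun_prop)]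
  simpa using (memLp_id_gaussianReal (μ := m) (v := v) n).integrable_norm_pow'

lemma integrable_polynomial_eval_gaussianReal (m : ℝ) (v : ℝ≥0) (Q : Polynomial ℝ) :
    Integrable (fun z => Q.eval z) (gaussianReal m v) := by
  simp_rw [Polynomial.eval_eq_sum_range]
  exact integrable_finsetSum _ fun i _ => (integrable_pow_gaussianReal m v i).const_mul _

lemma integral_sum_mul_pow_gaussianReal (m : ℝ) (v : ℝ≥0) {n : ℕ} (c : Fin n → ℝ) :
    ∫ z, ∑ i, c i * z ^ (i : ℕ) ∂gaussianReal m v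
      = ∑ i, c i * ∫ z, z ^ (i : ℕ) ∂gaussianReal m v := by
  rw [integral_finsetSum _ fun (i : Fin n) _ =>
    (integrable_pow_gaussianReal m v i).const_mul (c i)]
  simp only [integral_const_mul]

lemma integral_sextic_gaussianReal (v : ℝ≥0) (c₀ c₁ c₂ c₃ c₄ c₅ c₆ : ℝ) :
    ∫ z, (c₀ + c₁ * z + c₂ * z ^ 2 + c₃ * z ^ 3 + c₄ * z ^ 4 + c₅ * z ^ 5 + c₆ * z ^ 6)
        ∂gaussianReal 0 v
      = c₀ + c₂ * v + 3 * c₄ * v ^ 2 + 15 * c₆ * v ^ 3 := by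
  have hsum := integral_sum_mul_pow_gaussianReal 0 v ![c₀, c₁, c₂, c₃, c₄, c₅, c₆]
  simp only [Fin.sum_univ_seven] at hsum
  refine Eq.trans (by simp) (hsum.trans ?_)
  simp only [Nat.succ_eq_add_one, Nat.reduceAdd, Fin.isValue, Matrix.cons_val_zero,
    Fin.coe_ofNat_eq_mod, Nat.zero_mod, pow_zero, integral_const, probReal_univ, smul_eq_mul,
    mul_one, Matrix.cons_val_one, Nat.one_mod, pow_one, integral_id_gaussianReal, mul_zero,
    add_zero, Matrix.cons_val, Nat.reduceMod, integral_pow_add_two_gaussianReal,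
    CharP.cast_eq_zero, zero_add, one_mul, Nat.cast_one, Nat.cast_ofNat, Nat.mod_succ]
  ring

lemma integrable_quadratic_pow_gaussianReal (m : ℝ) (v : ℝ≥0) (A B C : ℝ) (n : ℕ) :
    Integrable (fun z => (A + B * z + C * z ^ 2) ^ n) (gaussianReal m v) := by
  convert integrable_polynomial_eval_gaussianReal m v
    ((.C A + .C B * .X + .C C * .X ^ 2) ^ n) using 2
  simp

variable (v : ℝ≥0) (A B C : ℝ)

lemma integral_quadratic_gaussianReal :
    ∫ z, (A + B * z + C * z ^ 2) ∂gaussianReal 0 v = A + C * v := by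
  simpa using integral_sextic_gaussianReal v A B C 0 0 0 0

lemma integral_quadratic_sq_gaussianReal :
    ∫ z, (A + B * z + C * z ^ 2) ^ 2 ∂gaussianReal 0 v
      = A ^ 2 + B ^ 2 * v + 2 * A * (C * v) + 3 * (C * v) ^ 2 := by
  calc ∫ z, (A + B * z + C * z ^ 2) ^ 2 ∂gaussianReal 0 v
      = ∫ z, (A ^ 2 + 2 * A * B * z + (B ^ 2 + 2 * A * C) * z ^ 2 + 2 * B * C * z ^ 3
          + C ^ 2 * z ^ 4 + 0 * z ^ 5 + 0 * z ^ 6) ∂gaussianReal 0 v := by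
        congr with z
        ring
    _ = _ := by
        rw [integral_sextic_gaussianReal]
        ring

lemma integral_quadratic_cube_gaussianReal :
    ∫ z, (A + B * z + C * z ^ 2) ^ 3 ∂gaussianReal 0 v
      = A ^ 3 + 3 * A ^ 2 * (C * v) + 3 * A * (B ^ 2 * v) + 9 * A * (C * v) ^ 2
        + 9 * (B ^ 2 * v) * (C * v) + 15 * (C * v) ^ 3 := by
  calc ∫ z, (A + B * z + C * z ^ 2) ^ 3 ∂gaussianReal 0 v
      = ∫ z, (A ^ 3 + 3 * A ^ 2 * B * z + (3 * A ^ 2 * C + 3 * A * B ^ 2) * z ^ 2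
          + (B ^ 3 + 6 * A * B * C) * z ^ 3 + (3 * A * C ^ 2 + 3 * B ^ 2 * C) * z ^ 4
          + 3 * B * C ^ 2 * z ^ 5 + C ^ 3 * z ^ 6) ∂gaussianReal 0 v := by
        congr with z
        ring
    _ = _ := by
        rw [integral_sextic_gaussianReal]
        ring

end GaussianMoments

section OneStep

variable {E : Type*} [NormedAddCommGroup E] [InnerProductSpace ℝ E]

/-- The exponential growth rate at `x` of the `p`-th moment of `dX = a dt + b dB`: the Itô generator
applied to `‖·‖ ^ p` at `x` equals `p * momentRate p x a b * ‖x‖ ^ p`. It is the functional `Phi`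
with the vectors `f x` and `g x` replaced by arbitrary ones. -/
noncomputable def momentRate (p : ℝ) (x a b : E) : ℝ :=
  (⟪x, a⟫ + (1 / 2) * ‖b‖ ^ 2) / ‖x‖ ^ 2 + ((p - 2) / 2) * ⟪x, b⟫ ^ 2 / ‖x‖ ^ 4

lemma momentRate_smul {c : ℝ} (hc : c ≠ 0) (p : ℝ) (x a b : E) :
    momentRate p (c • x) (c • a) (c • b) = momentRate p x a b := by
  have hinner (y : E) : ⟪c • x, c • y⟫ = c ^ 2 * ⟪x, y⟫ := by
    rw [real_inner_smul_left, inner_smul_right]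
    ring
  have hnorm (y : E) : ‖c • y‖ ^ 2 = c ^ 2 * ‖y‖ ^ 2 := by
    rw [norm_smul, mul_pow, Real.norm_eq_abs, sq_abs]
  rw [momentRate, momentRate, show ‖c • x‖ ^ 4 = c ^ 4 * ‖x‖ ^ 4 by
    linear_combination (‖c • x‖ ^ 2 + c ^ 2 * ‖x‖ ^ 2) * hnorm x]
  rw [hinner, hinner, hnorm, hnorm]
  have hdrift : c ^ 2 * ⟪x, a⟫ + 1 / 2 * (c ^ 2 * ‖b‖ ^ 2)
      = c ^ 2 * (⟪x, a⟫ + 1 / 2 * ‖b‖ ^ 2) := by ring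
  have hdiffusion : (p - 2) / 2 * (c ^ 2 * ⟪x, b⟫) ^ 2
      = c ^ 4 * ((p - 2) / 2 * ⟪x, b⟫ ^ 2) := by ring
  rw [hdrift, hdiffusion, mul_div_mul_left _ _ (pow_ne_zero 2 hc),
    mul_div_mul_left _ _ (pow_ne_zero 4 hc)]

/-- The increment of `‖·‖ ^ 2` along the Euler step from `x` with drift `a`, diffusion `b`,
step size `s` and noise `z`. -/
noncomputable def normSqIncrement (x a b : E) (s z : ℝ) : ℝ :=
  ‖x + s • a + z • b‖ ^ 2 - ‖x‖ ^ 2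

lemma normSqIncrement_eq_quadratic (x a b : E) (s z : ℝ) :
    normSqIncrement x a b s z = (2 * s * ⟪x, a⟫ + s ^ 2 * ‖a‖ ^ 2)
      + (2 * ⟪x + s • a, b⟫) * z + ‖b‖ ^ 2 * z ^ 2 := by
  rw [normSqIncrement, norm_add_sq_real, norm_add_sq_real]
  simp only [norm_smul, mul_pow, Real.norm_eq_abs, sq_abs, inner_smul_right]
  ring

section Moments

variable (x a b : E) (v : ℝ≥0)

lemma integrable_normSqIncrement_pow (n : ℕ) :
    Integrable (fun z => normSqIncrement x a b v z ^ n) (gaussianReal 0 v) := by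
  simpa only [normSqIncrement_eq_quadratic] using integrable_quadratic_pow_gaussianReal 0 v _ _ _ n

lemma integral_normSqIncrement :
    ∫ z, normSqIncrement x a b v z ∂gaussianReal 0 v
      = 2 * v * ⟪x, a⟫ + v ^ 2 * ‖a‖ ^ 2 + ‖b‖ ^ 2 * v := by
  simp only [normSqIncrement_eq_quadratic, integral_quadratic_gaussianReal]

end Moments

lemma quadratic_cube_moment_le {A B C η : ℝ} (hA : |A| ≤ 3 * η) (hB₀ : 0 ≤ B) (hB : B ≤ 16 * η)
    (hC₀ : 0 ≤ C) (hC : C ≤ η) (hη : η ≤ 1) :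
    A ^ 3 + 3 * A ^ 2 * C + 3 * A * B + 9 * A * C ^ 2 + 9 * B * C + 15 * C ^ 3 ≤ 384 * η ^ 2 := by
  have hη₀ : 0 ≤ η := hC₀.trans hC
  have hA_cube : A ^ 3 ≤ |A| ^ 3 := (le_abs_self _).trans_eq (abs_pow A 3)
  calc A ^ 3 + 3 * A ^ 2 * C + 3 * A * B + 9 * A * C ^ 2 + 9 * B * C + 15 * C ^ 3
      ≤ |A| ^ 3 + 3 * |A| ^ 2 * C + 3 * |A| * B + 9 * |A| * C ^ 2 + 9 * B * C + 15 * C ^ 3 := by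
        rw [sq_abs]
        gcongr <;> exact le_abs_self A
    _ ≤ (3 * η) ^ 3 + 3 * (3 * η) ^ 2 * η + 3 * (3 * η) * (16 * η) + 9 * (3 * η) * η ^ 2
          + 9 * (16 * η) * η + 15 * η ^ 3 := by gcongr
    _ = 288 * η ^ 2 + 96 * (η * η ^ 2) := by ring
    _ ≤ 288 * η ^ 2 + 96 * (1 * η ^ 2) := by gcongr
    _ = 384 * η ^ 2 := by ring

section Bounds

variable {u a b : E} {v : ℝ≥0} {K : ℝ}

lemma abs_two_mul_inner_add_sq_le (hu : ‖u‖ = 1) (ha : ‖a‖ ≤ K) (hvK : v * K ≤ 1) :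
    |2 * v * ⟪u, a⟫ + v ^ 2 * ‖a‖ ^ 2| ≤ 3 * (v * K) := by
  have hva : v * ‖a‖ ≤ v * K := by gcongr
  have hinner : |⟪u, a⟫| ≤ ‖a‖ := by simpa [hu] using abs_real_inner_le_norm u a
  calc |2 * v * ⟪u, a⟫ + v ^ 2 * ‖a‖ ^ 2|
      ≤ |2 * v * ⟪u, a⟫| + |v ^ 2 * ‖a‖ ^ 2| := abs_add_le _ _
    _ = 2 * (v * |⟪u, a⟫|) + (v * ‖a‖) * (v * ‖a‖) := by
        rw [abs_of_nonneg (by positivity : 0 ≤ (v : ℝ) ^ 2 * ‖a‖ ^ 2), abs_mul,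
          abs_of_nonneg (by positivity : 0 ≤ 2 * (v : ℝ))]
        ring
    _ ≤ 2 * (v * ‖a‖) + 1 * (v * ‖a‖) := by gcongr; exact hva.trans hvK
    _ ≤ 3 * (v * K) := by linarith

lemma sq_two_mul_inner_add_smul_le (hu : ‖u‖ = 1) (ha : ‖a‖ ≤ K) (hb : ‖b‖ ^ 2 ≤ K)
    (hvK : v * K ≤ 1) : (2 * ⟪u + (v : ℝ) • a, b⟫) ^ 2 * v ≤ 16 * (v * K) := by
  have hnorm : ‖u + (v : ℝ) • a‖ ≤ 2 := by
    have hva : ‖(v : ℝ) • a‖ ≤ 1 := by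
      rw [norm_smul, Real.norm_of_nonneg v.coe_nonneg]
      exact (mul_le_mul_of_nonneg_left ha v.coe_nonneg).trans hvK
    linarith [norm_add_le u ((v : ℝ) • a)]
  calc (2 * ⟪u + (v : ℝ) • a, b⟫) ^ 2 * v = 4 * |⟪u + (v : ℝ) • a, b⟫| ^ 2 * v := by
        rw [sq_abs]
        ring
    _ ≤ 4 * (2 * ‖b‖) ^ 2 * v := by
        gcongr
        exact (abs_real_inner_le_norm _ _).trans (by gcongr)
    _ = 16 * (v * ‖b‖ ^ 2) := by ring
    _ ≤ 16 * (v * K) := by gcongr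

lemma four_mul_inner_sq_sub_le_sq_two_mul_inner (hu : ‖u‖ = 1) (ha : ‖a‖ ≤ K) (hb : ‖b‖ ^ 2 ≤ K) :
    4 * v * ⟪u, b⟫ ^ 2 - 8 * (v * K) ^ 2 ≤ (2 * ⟪u + (v : ℝ) • a, b⟫) ^ 2 * v := by
  have hcross : |⟪u, b⟫ * ⟪a, b⟫| ≤ K ^ 2 := by
    calc |⟪u, b⟫ * ⟪a, b⟫| = |⟪u, b⟫| * |⟪a, b⟫| := abs_mul _ _
      _ ≤ (‖u‖ * ‖b‖) * (‖a‖ * ‖b‖) := by gcongr <;> exact abs_real_inner_le_norm _ _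
      _ = ‖a‖ * ‖b‖ ^ 2 := by rw [hu]; ring
      _ ≤ K * K := mul_le_mul ha hb (by positivity) ((norm_nonneg a).trans ha)
      _ = K ^ 2 := (sq K).symm
  have hexpand : (2 * ⟪u + (v : ℝ) • a, b⟫) ^ 2 * v
      = 4 * v * ⟪u, b⟫ ^ 2 + 8 * v ^ 2 * (⟪u, b⟫ * ⟪a, b⟫) + 4 * v * (v * ⟪a, b⟫) ^ 2 := by
    rw [inner_add_left, real_inner_smul_left]
    ring
  have hlower := mul_le_mul_of_nonneg_left (abs_le.1 hcross).1
    (by positivity : 0 ≤ 8 * (v : ℝ) ^ 2)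
  have hsq : 0 ≤ 4 * v * (v * ⟪a, b⟫) ^ 2 := by positivity
  rw [hexpand]
  linarith

lemma le_integral_normSqIncrement_sq (hu : ‖u‖ = 1) (ha : ‖a‖ ≤ K) (hb : ‖b‖ ^ 2 ≤ K)
    (hvK : v * K ≤ 1) :
    4 * v * ⟪u, b⟫ ^ 2 - 14 * (v * K) ^ 2
      ≤ ∫ z, normSqIncrement u a b v z ^ 2 ∂gaussianReal 0 v := by
  simp only [normSqIncrement_eq_quadratic, integral_quadratic_sq_gaussianReal]
  set A := 2 * v * ⟪u, a⟫ + v ^ 2 * ‖a‖ ^ 2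
  have hC : ‖b‖ ^ 2 * v ≤ v * K := by rw [mul_comm]; gcongr
  have hcross : |A * (‖b‖ ^ 2 * v)| ≤ 3 * (v * K) ^ 2 := by
    calc |A * (‖b‖ ^ 2 * v)| = |A| * (‖b‖ ^ 2 * v) := by
          rw [abs_mul, abs_of_nonneg (by positivity : 0 ≤ ‖b‖ ^ 2 * (v : ℝ))]
      _ ≤ 3 * (v * K) * (v * K) := mul_le_mul (abs_two_mul_inner_add_sq_le hu ha hvK) hC
          (by positivity) ((abs_nonneg A).trans (abs_two_mul_inner_add_sq_le hu ha hvK))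
      _ = 3 * (v * K) ^ 2 := by ring
  linarith [four_mul_inner_sq_sub_le_sq_two_mul_inner (v := v) hu ha hb, (abs_le.1 hcross).1,
    sq_nonneg A, sq_nonneg (‖b‖ ^ 2 * (v : ℝ))]

lemma integral_normSqIncrement_cube_le (hu : ‖u‖ = 1) (ha : ‖a‖ ≤ K) (hb : ‖b‖ ^ 2 ≤ K)
    (hvK : v * K ≤ 1) :
    ∫ z, normSqIncrement u a b v z ^ 3 ∂gaussianReal 0 v ≤ 384 * (v * K) ^ 2 := by
  simp only [normSqIncrement_eq_quadratic, integral_quadratic_cube_gaussianReal]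
  exact quadratic_cube_moment_le (abs_two_mul_inner_add_sq_le hu ha hvK) (by positivity)
    (sq_two_mul_inner_add_smul_le hu ha hb hvK) (by positivity)
    (by rw [mul_comm]; gcongr) hvK

lemma cubicTaylor_normSqIncrement_le {p : ℝ} (hp : p ∈ Icc (0 : ℝ) 2) (hu : ‖u‖ = 1) (ha : ‖a‖ ≤ K)
    (hb : ‖b‖ ^ 2 ≤ K) (hvK : v * K ≤ 1) :
    1 + p / 2 * ∫ z, normSqIncrement u a b v z ∂gaussianReal 0 v
        + p / 2 * (p / 2 - 1) / 2 * ∫ z, normSqIncrement u a b v z ^ 2 ∂gaussianReal 0 v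
        + p / 2 * (p / 2 - 1) * (p / 2 - 2) / 6
          * ∫ z, normSqIncrement u a b v z ^ 3 ∂gaussianReal 0 v
      ≤ 1 + p * (v * momentRate p u a b) + 68 * p * (v * K) ^ 2 := by
  obtain ⟨q, rfl⟩ : ∃ q, p = 2 * q := ⟨p / 2, by ring⟩
  have hq₀ : 0 ≤ q := by linarith [hp.1]
  have hq₁ : 0 ≤ 1 - q := by linarith [hp.2]
  rw [mul_div_cancel_left₀ q two_ne_zero, integral_normSqIncrement]
  have hdrift_sq : q * (v ^ 2 * ‖a‖ ^ 2) ≤ q * (v * K) ^ 2 := by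
    rw [mul_pow]
    gcongr
  have hsecond := mul_le_mul_of_nonneg_left (le_integral_normSqIncrement_sq hu ha hb hvK)
    (by positivity : 0 ≤ q * (1 - q) / 2)
  have hthird := mul_le_mul_of_nonneg_left (integral_normSqIncrement_cube_le hu ha hb hvK)
    (mul_nonneg (mul_nonneg hq₀ hq₁) (by linarith) : 0 ≤ q * (1 - q) * (2 - q))
  have hsecond_coeff : q * (1 - q) * (v * K) ^ 2 ≤ q * (v * K) ^ 2 := by
    gcongr
    exact mul_le_of_le_one_right hq₀ (by linarith)
  have hthird_coeff : q * (1 - q) * (2 - q) * (v * K) ^ 2 ≤ q * 2 * (v * K) ^ 2 := by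
    gcongr <;> nlinarith
  simp only [momentRate, hu]
  linarith

lemma enorm_rpow_eq_ofReal_one_add_normSqIncrement {p : ℝ} (hp : 0 ≤ p) (hu : ‖u‖ = 1) (s z : ℝ) :
    ‖u + s • a + z • b‖ₑ ^ p = ENNReal.ofReal ((1 + normSqIncrement u a b s z) ^ (p / 2)) := by
  rw [← ofReal_norm, ENNReal.ofReal_rpow_of_nonneg (norm_nonneg _) hp, normSqIncrement, hu,
    one_pow, add_sub_cancel, ← Real.rpow_natCast, ← Real.rpow_mul (norm_nonneg _)]
  congr 2
  push_cast
  ring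

lemma lintegral_enorm_rpow_step_le_of_norm_eq_one {p : ℝ} (hp : p ∈ Icc (0 : ℝ) 2) (hu : ‖u‖ = 1)
    (ha : ‖a‖ ≤ K) (hb : ‖b‖ ^ 2 ≤ K) (hvK : v * K ≤ 1) :
    ∫⁻ z, ‖u + (v : ℝ) • a + z • b‖ₑ ^ p ∂gaussianReal 0 v
      ≤ ENNReal.ofReal (1 + p * (v * momentRate p u a b) + 68 * p * (v * K) ^ 2) := by
  have hbelow (z : ℝ) : -1 ≤ normSqIncrement u a b v z := by
    rw [normSqIncrement, hu]
    linarith [sq_nonneg ‖u + (v : ℝ) • a + z • b‖]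
  simp only [enorm_rpow_eq_ofReal_one_add_normSqIncrement hp.1 hu]
  refine (lintegral_rpow_one_add_le ⟨by linarith [hp.1], by linarith [hp.2]⟩ hbelow
    (by simpa using integrable_normSqIncrement_pow u a b v 1)
    (integrable_normSqIncrement_pow u a b v 2) (integrable_normSqIncrement_pow u a b v 3)).trans ?_
  exact ENNReal.ofReal_le_ofReal (cubicTaylor_normSqIncrement_le hp hu ha hb hvK)

end Bounds

lemma lintegral_enorm_rpow_step_le {x a b : E} {v : ℝ≥0} {K p : ℝ} (hp : p ∈ Icc (0 : ℝ) 2)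
    (hx : x ≠ 0) (ha : ‖a‖ ≤ K * ‖x‖) (hb : ‖b‖ ^ 2 ≤ K * ‖x‖ ^ 2) (hvK : v * K ≤ 1) :
    ∫⁻ z, ‖x + (v : ℝ) • a + z • b‖ₑ ^ p ∂gaussianReal 0 v
      ≤ ENNReal.ofReal (1 + p * (v * momentRate p x a b) + 68 * p * (v * K) ^ 2) * ‖x‖ₑ ^ p := by
  have hr : 0 < ‖x‖ := norm_pos_iff.2 hx
  have hnorm (y : E) : ‖‖x‖⁻¹ • y‖ = ‖y‖ / ‖x‖ := by
    rw [norm_smul, norm_inv, norm_norm, inv_mul_eq_div]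
  have hscale (z : ℝ) : ‖x + (v : ℝ) • a + z • b‖ₑ ^ p
      = ‖x‖ₑ ^ p * ‖‖x‖⁻¹ • x + (v : ℝ) • ‖x‖⁻¹ • a + z • ‖x‖⁻¹ • b‖ₑ ^ p := by
    have hfactor : x + (v : ℝ) • a + z • b
        = ‖x‖ • (‖x‖⁻¹ • x + (v : ℝ) • ‖x‖⁻¹ • a + z • ‖x‖⁻¹ • b) := by
      rw [smul_comm (v : ℝ), smul_comm z, ← smul_add, ← smul_add, smul_inv_smul₀ hr.ne']
    rw [hfactor, enorm_smul, enorm_norm, ENNReal.mul_rpow_of_nonneg _ _ hp.1]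
  simp only [hscale]
  rw [lintegral_const_mul' _ _ (by simp [hp.1]), mul_comm, ← momentRate_smul (inv_ne_zero hr.ne')]
  gcongr
  refine lintegral_enorm_rpow_step_le_of_norm_eq_one hp ?_ ?_ ?_ hvK
  · rw [hnorm, div_self hr.ne']
  · rwa [hnorm, div_le_iff₀ hr]
  · rwa [hnorm, div_pow, div_le_iff₀ (by positivity)]

end OneStep

section Truncation

variable {d : ℕ} {f g : EuclideanSpace ℝ (Fin d) → EuclideanSpace ℝ (Fin d)} {h p lam : ℝ}

lemma exists_pos_trunc_eq_inv_smul (hh : 0 < h) (x : EuclideanSpace ℝ (Fin d)) :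
    ∃ c : ℝ, 0 < c ∧ ‖c • x‖ ≤ h ∧
      ∀ f : EuclideanSpace ℝ (Fin d) → EuclideanSpace ℝ (Fin d),
        trunc f h x = c⁻¹ • f (c • x) := by
  by_cases hx : ‖x‖ ≤ h
  · exact ⟨1, one_pos, by rwa [one_smul],
      fun f => by rw [trunc, if_pos hx, inv_one, one_smul, one_smul]⟩
  · have hr : 0 < ‖x‖ := hh.trans (not_le.1 hx)
    refine ⟨h / ‖x‖, div_pos hh hr, ?_, fun f => by rw [trunc, if_neg hx, inv_div]⟩
    rw [norm_smul, Real.norm_of_nonneg (div_pos hh hr).le, div_mul_cancel₀ _ hr.ne']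

lemma norm_trunc_le {ℓ : ℝ} (hh : 0 < h) (hf : ∀ x, ‖x‖ ≤ h → ‖f x‖ ≤ ℓ * ‖x‖)
    (x : EuclideanSpace ℝ (Fin d)) : ‖trunc f h x‖ ≤ ℓ * ‖x‖ := by
  obtain ⟨c, hc, hcx, htrunc⟩ := exists_pos_trunc_eq_inv_smul hh x
  rw [htrunc, norm_smul, norm_inv, Real.norm_of_nonneg hc.le, inv_mul_le_iff₀ hc]
  calc ‖f (c • x)‖ ≤ ℓ * ‖c • x‖ := hf _ hcx
    _ = c * (ℓ * ‖x‖) := by rw [norm_smul, Real.norm_of_nonneg hc.le, mul_left_comm]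

lemma Phi_trunc_le (hh : 0 < h) (hPhi : ∀ x, x ≠ 0 → Phi f g p x ≤ -lam)
    {x : EuclideanSpace ℝ (Fin d)} (hx : x ≠ 0) : Phi (trunc f h) (trunc g h) p x ≤ -lam := by
  obtain ⟨c, hc, -, htrunc⟩ := exists_pos_trunc_eq_inv_smul hh x
  calc Phi (trunc f h) (trunc g h) p x
      = momentRate p (c • x) (c • c⁻¹ • f (c • x)) (c • c⁻¹ • g (c • x)) := by
        rw [momentRate_smul hc.ne', ← htrunc, ← htrunc]
        rfl
    _ = Phi f g p (c • x) := by
        rw [smul_inv_smul₀ hc.ne', smul_inv_smul₀ hc.ne']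
        rfl
    _ ≤ -lam := hPhi _ (smul_ne_zero hc.ne' hx)

lemma measurable_trunc (hf : Measurable f) (h : ℝ) : Measurable (trunc f h) := by
  have hscaled : Measurable fun x => f ((h / ‖x‖) • x) := hf.comp (by fun_prop)
  exact Measurable.ite (measurableSet_le measurable_norm measurable_const) hf
    ((measurable_norm.div_const h).smul hscaled)

end Truncation

section RandomRecursion

variable {E T Ω : Type*} [MeasurableSpace E] [MeasurableSpace T]
  {S : E → T → E} {ξ : ℕ → Ω → T} {X : ℕ → Ω → E} {x₀ : E}

lemma exists_measurable_eq_of_recursion (hS : Measurable (Function.uncurry S))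
    (hX₀ : ∀ ω, X 0 ω = x₀) (hX : ∀ k ω, X (k + 1) ω = S (X k ω) (ξ k ω)) (k : ℕ) :
    ∃ ψ : (Finset.range k → T) → E, Measurable ψ ∧ X k = ψ ∘ fun ω i => ξ i ω := by
  induction k with
  | zero => exact ⟨fun _ => x₀, measurable_const, funext hX₀⟩
  | succ k ih =>
    obtain ⟨ψ, hψ, hXk⟩ := ih
    let past (y : Finset.range (k + 1) → T) (i : Finset.range k) : T :=
      y ⟨i, Finset.range_subset_range.2 k.le_succ i.2⟩
    have hpast : Measurable past := measurable_pi_lambda _ fun i => measurable_pi_apply _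
    refine ⟨fun y => S (ψ (past y)) (y ⟨k, Finset.self_mem_range_succ k⟩),
      hS.comp ((hψ.comp hpast).prodMk (measurable_pi_apply _)), funext fun ω => ?_⟩
    rw [hX, hXk]
    rfl

variable [MeasurableSpace Ω] {P : Measure Ω}

lemma measurable_of_recursion (hS : Measurable (Function.uncurry S)) (hξ : ∀ k, Measurable (ξ k))
    (hX₀ : ∀ ω, X 0 ω = x₀) (hX : ∀ k ω, X (k + 1) ω = S (X k ω) (ξ k ω)) (k : ℕ) :
    Measurable (X k) := by
  obtain ⟨ψ, hψ, hXk⟩ := exists_measurable_eq_of_recursion hS hX₀ hX k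
  exact hXk ▸ hψ.comp (measurable_pi_lambda _ fun i => hξ i)

lemma indepFun_of_recursion (hS : Measurable (Function.uncurry S)) (hξ : ∀ k, Measurable (ξ k))
    (hindep : iIndepFun ξ P) (hX₀ : ∀ ω, X 0 ω = x₀)
    (hX : ∀ k ω, X (k + 1) ω = S (X k ω) (ξ k ω)) (k : ℕ) : IndepFun (X k) (ξ k) P := by
  obtain ⟨ψ, hψ, hXk⟩ := exists_measurable_eq_of_recursion hS hX₀ hX k
  have hpast := hindep.indepFun_finset (Finset.range k) {k} (by simp) hξ
  exact hXk ▸ hpast.comp hψ (measurable_pi_apply (⟨k, by simp⟩ : ({k} : Finset ℕ)))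

lemma lintegral_le_pow_mul_of_recursion [IsProbabilityMeasure P] {V : E → ℝ≥0∞} {c : ℝ≥0∞}
    (hV : Measurable V) (hS : Measurable (Function.uncurry S)) (hξ : ∀ k, Measurable (ξ k))
    (hindep : iIndepFun ξ P) (hstep : ∀ k x, ∫⁻ z, V (S x z) ∂P.map (ξ k) ≤ c * V x)
    (hX₀ : ∀ ω, X 0 ω = x₀) (hX : ∀ k ω, X (k + 1) ω = S (X k ω) (ξ k ω)) (k : ℕ) :
    ∫⁻ ω, V (X k ω) ∂P ≤ c ^ k * V x₀ := by
  induction k with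
  | zero => simp [hX₀]
  | succ k ih =>
    have hXk : Measurable (X k) := measurable_of_recursion hS hξ hX₀ hX k
    have hlaw : P.map (fun ω => (X k ω, ξ k ω)) = (P.map (X k)).prod (P.map (ξ k)) :=
      (indepFun_iff_map_prod_eq_prod_map_map hXk.aemeasurable (hξ k).aemeasurable).1
        (indepFun_of_recursion hS hξ hindep hX₀ hX k)
    have hVS : Measurable fun y : E × T => V (S y.1 y.2) := hV.comp hS
    calc ∫⁻ ω, V (X (k + 1) ω) ∂P
        = ∫⁻ y, V (S y.1 y.2) ∂P.map fun ω => (X k ω, ξ k ω) := by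
          simp only [hX, lintegral_map hVS (hXk.prodMk (hξ k))]
      _ = ∫⁻ x, ∫⁻ z, V (S x z) ∂P.map (ξ k) ∂P.map (X k) := by
          rw [hlaw, lintegral_prod _ hVS.aemeasurable]
      _ ≤ ∫⁻ x, c * V x ∂P.map (X k) := lintegral_mono (hstep k)
      _ = c * ∫⁻ ω, V (X k ω) ∂P := by
          rw [lintegral_const_mul _ hV, lintegral_map hV hXk]
      _ ≤ c * (c ^ k * V x₀) := by gcongr
      _ = c ^ (k + 1) * V x₀ := by ring

end RandomRecursion

section StepSize

lemma one_sub_pow_le_exp_neg_mul {r : ℝ} (hr : r ≤ 1) (k : ℕ) :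
    (1 - r) ^ k ≤ Real.exp (-(r * k)) := by
  calc (1 - r) ^ k ≤ Real.exp (-r) ^ k :=
        pow_le_pow_left₀ (sub_nonneg.2 hr) (Real.one_sub_le_exp_neg r) k
    _ = Real.exp (-(r * k)) := by rw [← Real.exp_nat_mul]; congr 1; ring

lemma tendsto_mul_one_add_sq_sq {ℓ : ℝ → ℝ}
    (hℓ : Tendsto (fun Δ => ℓ Δ ^ 4 * Δ) (𝓝[>] 0) (𝓝 0)) :
    Tendsto (fun Δ => Δ * (1 + ℓ Δ ^ 2) ^ 2) (𝓝[>] 0) (𝓝 0) := by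
  have hid : Tendsto (fun Δ : ℝ => Δ) (𝓝[>] 0) (𝓝 0) :=
    tendsto_nhdsWithin_of_tendsto_nhds tendsto_id
  have hbound : Tendsto (fun Δ => 2 * Δ + 2 * (ℓ Δ ^ 4 * Δ)) (𝓝[>] 0) (𝓝 0) := by
    simpa using (hid.const_mul 2).add (hℓ.const_mul 2)
  refine squeeze_zero' ?_ ?_ hbound
  · filter_upwards [self_mem_nhdsWithin] with Δ (hΔ : 0 < Δ)
    positivity
  · filter_upwards [self_mem_nhdsWithin] with Δ (hΔ : 0 < Δ)
    linarith [mul_nonneg hΔ.le (sq_nonneg (1 - ℓ Δ ^ 2))]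

lemma exists_stepSize_bound {ℓ : ℝ → ℝ} {Δ₀ ε : ℝ} (hΔ₀ : 0 < Δ₀) (hε : 0 < ε) (r : ℝ)
    (hℓ : Tendsto (fun Δ => ℓ Δ ^ 4 * Δ) (𝓝[Ioc 0 Δ₀] 0) (𝓝 0)) :
    ∃ Δs ∈ Ioc (0 : ℝ) Δ₀, ∀ Δ ∈ Ioo (0 : ℝ) Δs,
      Δ * (1 + ℓ Δ ^ 2) ≤ 1 ∧ 68 * (Δ * (1 + ℓ Δ ^ 2) ^ 2) ≤ ε ∧ r * Δ ≤ 1 := by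
  rw [nhdsWithin_Ioc_eq_nhdsGT hΔ₀] at hℓ
  have hsq := tendsto_mul_one_add_sq_sq hℓ
  have hr : Tendsto (fun Δ => r * Δ) (𝓝[>] 0) (𝓝 0) :=
    tendsto_nhdsWithin_of_tendsto_nhds ((continuous_const_mul r).tendsto' 0 0 (mul_zero r))
  refine (mem_nhdsGT_iff_exists_mem_Ioc_Ioo_subset hΔ₀).1 ?_
  filter_upwards [self_mem_nhdsWithin, hsq.eventually_le_const one_pos,
    hsq.eventually_le_const (by positivity : 0 < ε / 68), hr.eventually_le_const one_pos]
    with Δ (hΔ : 0 < Δ) hΔ_one hΔ_ε hrΔ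
  refine ⟨le_trans ?_ hΔ_one, by linarith, hrΔ⟩
  gcongr
  exact le_self_pow₀ (by linarith [sq_nonneg (ℓ Δ)]) two_ne_zero

end StepSize

lemma continuous_of_lipschitz_on_balls {E F : Type*} [SeminormedAddCommGroup E]
    [SeminormedAddCommGroup F] {f : E → F} {L : ℝ → ℝ}
    (hf : ∀ R > 0, ∀ x y, ‖x‖ ≤ R → ‖y‖ ≤ R → ‖f x - f y‖ ≤ L R * ‖x - y‖) : Continuous f := by
  refine continuous_iff_continuousAt.2 fun x => ?_
  refine continuousAt_of_locally_lipschitz one_pos (L (‖x‖ + 1)) fun y hy => ?_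
  rw [dist_eq_norm] at hy ⊢
  rw [dist_eq_norm]
  exact hf _ (by positivity) y x (by linarith [norm_le_norm_add_norm_sub' y x]) (by linarith)

section TruncatedEuler

variable {d : ℕ} {f g : EuclideanSpace ℝ (Fin d) → EuclideanSpace ℝ (Fin d)}
  {h p lam ℓ Δ ε : ℝ}

lemma lintegral_enorm_rpow_truncatedEulerStep_le (hp : p ∈ Ioc (0 : ℝ) 2) (hh : 0 < h)
    (hf : ∀ x, ‖x‖ ≤ h → ‖f x‖ ≤ ℓ * ‖x‖) (hg : ∀ x, ‖x‖ ≤ h → ‖g x‖ ≤ ℓ * ‖x‖)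
    (hPhi : ∀ x, x ≠ 0 → Phi f g p x ≤ -lam) (hΔ : 0 ≤ Δ) (hΔ_one : Δ * (1 + ℓ ^ 2) ≤ 1)
    (hΔ_ε : 68 * (Δ * (1 + ℓ ^ 2) ^ 2) ≤ ε) (x : EuclideanSpace ℝ (Fin d)) :
    ∫⁻ z, ‖x + Δ • trunc f h x + z • trunc g h x‖ₑ ^ p ∂gaussianReal 0 Δ.toNNReal
      ≤ ENNReal.ofReal (1 - p * (lam - ε) * Δ) * ‖x‖ₑ ^ p := by
  have hF : ‖trunc f h x‖ ≤ ℓ * ‖x‖ := norm_trunc_le hh hf x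
  have hG : ‖trunc g h x‖ ≤ ℓ * ‖x‖ := norm_trunc_le hh hg x
  obtain rfl | hx := eq_or_ne x 0
  · have hF₀ : trunc f h 0 = 0 := by simpa using hF
    have hG₀ : trunc g h 0 = 0 := by simpa using hG
    simp [hF₀, hG₀, hp.1]
  lift Δ to ℝ≥0 using hΔ
  rw [Real.toNNReal_coe]
  have hG_sq : ‖trunc g h x‖ ^ 2 ≤ (1 + ℓ ^ 2) * ‖x‖ ^ 2 := by
    calc ‖trunc g h x‖ ^ 2 ≤ (ℓ * ‖x‖) ^ 2 := by gcongr
      _ = ℓ ^ 2 * ‖x‖ ^ 2 := mul_pow _ _ _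
      _ ≤ (1 + ℓ ^ 2) * ‖x‖ ^ 2 := by gcongr; linarith
  refine (lintegral_enorm_rpow_step_le ⟨hp.1.le, hp.2⟩ hx
    (hF.trans (by gcongr; nlinarith)) hG_sq hΔ_one).trans ?_
  gcongr
  have hrate : momentRate p x (trunc f h x) (trunc g h x) + 68 * (Δ * (1 + ℓ ^ 2) ^ 2)
      ≤ -lam + ε := add_le_add (Phi_trunc_le hh hPhi hx) hΔ_ε
  linarith [mul_le_mul_of_nonneg_left hrate (mul_nonneg hp.1.le Δ.coe_nonneg)]

lemma lintegral_enorm_rpow_truncatedEuler_le (hp : p ∈ Ioc (0 : ℝ) 2) (hh : 0 < h)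
    (hf : ∀ x, ‖x‖ ≤ h → ‖f x‖ ≤ ℓ * ‖x‖) (hg : ∀ x, ‖x‖ ≤ h → ‖g x‖ ≤ ℓ * ‖x‖)
    (hPhi : ∀ x, x ≠ 0 → Phi f g p x ≤ -lam) (hΔ : 0 ≤ Δ) (hΔ_one : Δ * (1 + ℓ ^ 2) ≤ 1)
    (hΔ_ε : 68 * (Δ * (1 + ℓ ^ 2) ^ 2) ≤ ε) (hf_meas : Measurable f) (hg_meas : Measurable g)
    (hrate : p * (lam - ε) * Δ ≤ 1) {Ω : Type*} [MeasurableSpace Ω] {P : Measure Ω}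
    [IsProbabilityMeasure P] {ξ : ℕ → Ω → ℝ} (hξ : ∀ k, Measurable (ξ k)) (hindep : iIndepFun ξ P)
    (hlaw : ∀ k, P.map (ξ k) = gaussianReal 0 Δ.toNNReal) {x₀ : EuclideanSpace ℝ (Fin d)}
    {X : ℕ → Ω → EuclideanSpace ℝ (Fin d)} (hX₀ : ∀ ω, X 0 ω = x₀)
    (hX : ∀ k ω, X (k + 1) ω = X k ω + Δ • trunc f h (X k ω) + ξ k ω • trunc g h (X k ω))
    (k : ℕ) :
    ∫⁻ ω, ‖X k ω‖ₑ ^ p ∂P ≤ ENNReal.ofReal (‖x₀‖ ^ p * (1 - p * (lam - ε) * Δ) ^ k) := by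
  have hF : Measurable (trunc f h) := measurable_trunc hf_meas h
  have hG : Measurable (trunc g h) := measurable_trunc hg_meas h
  have hS : Measurable (Function.uncurry fun x (z : ℝ) =>
      x + Δ • trunc f h x + z • trunc g h x) := by
    simp only [Function.uncurry_def]
    fun_prop
  have hstep (j : ℕ) (x : EuclideanSpace ℝ (Fin d)) :
      ∫⁻ z, ‖x + Δ • trunc f h x + z • trunc g h x‖ₑ ^ p ∂P.map (ξ j)
        ≤ ENNReal.ofReal (1 - p * (lam - ε) * Δ) * ‖x‖ₑ ^ p := by
    rw [hlaw]
    exact lintegral_enorm_rpow_truncatedEulerStep_le hp hh hf hg hPhi hΔ hΔ_one hΔ_ε x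
  calc ∫⁻ ω, ‖X k ω‖ₑ ^ p ∂P ≤ ENNReal.ofReal (1 - p * (lam - ε) * Δ) ^ k * ‖x₀‖ₑ ^ p :=
        lintegral_le_pow_mul_of_recursion (V := (‖·‖ₑ ^ p)) (by fun_prop) hS hξ hindep hstep
          hX₀ hX k
    _ = ENNReal.ofReal (‖x₀‖ ^ p * (1 - p * (lam - ε) * Δ) ^ k) := by
        rw [← ofReal_norm, ENNReal.ofReal_rpow_of_nonneg (norm_nonneg _) hp.1.le,
          ← ENNReal.ofReal_pow (sub_nonneg.2 hrate), mul_comm,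
          ← ENNReal.ofReal_mul (by positivity)]

end TruncatedEuler

theorem stmt16_general {d : ℕ} {f g : EuclideanSpace ℝ (Fin d) → EuclideanSpace ℝ (Fin d)}
    (hf : Measurable f) (hg : Measurable g) {L : ℝ → ℝ}
    (hgrowth : ∀ R > (0 : ℝ), ∀ x, ‖x‖ ≤ R → ‖f x‖ ⊔ ‖g x‖ ≤ L R * ‖x‖)
    {p lam : ℝ} (hp : p ∈ Ioc (0 : ℝ) 2) (hPhi : ∀ x, x ≠ 0 → Phi f g p x ≤ -lam)
    {Δ₀ : ℝ} (hΔ₀ : 0 < Δ₀) {h : ℝ → ℝ} (hh : ∀ Δ ∈ Ioc (0 : ℝ) Δ₀, 0 < h Δ)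
    (hLh : Tendsto (fun Δ => L (h Δ) ^ 4 * Δ) (𝓝[Ioc 0 Δ₀] 0) (𝓝 0)) {ε : ℝ} (hε : 0 < ε) :
    ∃ Δs ∈ Ioc (0 : ℝ) Δ₀, ∀ Δ ∈ Ioo (0 : ℝ) Δs,
      ∀ (Ω : Type*) [MeasurableSpace Ω] (P : Measure Ω) [IsProbabilityMeasure P]
        (ξ : ℕ → Ω → ℝ), (∀ k, Measurable (ξ k)) → iIndepFun ξ P →
        (∀ k, P.map (ξ k) = gaussianReal 0 Δ.toNNReal) →
        ∀ (x₀ : EuclideanSpace ℝ (Fin d)) (X : ℕ → Ω → EuclideanSpace ℝ (Fin d)),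
        (∀ ω, X 0 ω = x₀) →
        (∀ k ω, X (k + 1) ω
            = X k ω + Δ • trunc f (h Δ) (X k ω) + ξ k ω • trunc g (h Δ) (X k ω)) →
        ∀ k : ℕ,
          ∫⁻ ω, ‖X k ω‖ₑ ^ p ∂P ≤ ENNReal.ofReal (‖x₀‖ ^ p * (1 - p * (lam - ε) * Δ) ^ k) ∧
          ‖x₀‖ ^ p * (1 - p * (lam - ε) * Δ) ^ k
            ≤ ‖x₀‖ ^ p * Real.exp (-(p * (lam - ε) * (k * Δ))) := by
  obtain ⟨Δs, hΔs, hsmall⟩ := exists_stepSize_bound hΔ₀ hε (p * (lam - ε)) hLh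
  refine ⟨Δs, hΔs, fun Δ hΔ Ω _ P _ ξ hξ hindep hlaw x₀ X hX₀ hX k => ?_⟩
  obtain ⟨hΔ_one, hΔ_ε, hrate⟩ := hsmall Δ hΔ
  have hhΔ : 0 < h Δ := hh Δ ⟨hΔ.1, hΔ.2.le.trans hΔs.2⟩
  constructor
  · exact lintegral_enorm_rpow_truncatedEuler_le hp hhΔ
      (fun x hx => (le_max_left _ _).trans (hgrowth _ hhΔ x hx))
      (fun x hx => (le_max_right _ _).trans (hgrowth _ hhΔ x hx))
      hPhi hΔ.1.le hΔ_one hΔ_ε hf hg hrate hξ hindep hlaw hX₀ hX k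
  · rw [mul_comm (k : ℝ) Δ, ← mul_assoc (p * (lam - ε))]
    gcongr
    exact one_sub_pow_le_exp_neg_mul hrate k

theorem stmt16 {d : ℕ} (hd : 1 ≤ d)
    (f g : EuclideanSpace ℝ (Fin d) → EuclideanSpace ℝ (Fin d))
    (hf0 : f 0 = 0) (hg0 : g 0 = 0)
    (L : ℝ → ℝ) (hLpos : ∀ R > (0:ℝ), 0 < L R) (hLmono : MonotoneOn L (Set.Ioi 0))
    (hlip : ∀ R > (0:ℝ), ∀ x y : EuclideanSpace ℝ (Fin d), ‖x‖ ≤ R → ‖y‖ ≤ R →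
      ‖f x - f y‖ ⊔ ‖g x - g y‖ ≤ L R * ‖x - y‖)
    (p lam : ℝ) (hp : p ∈ Set.Ioo (0:ℝ) 1) (hlam : 0 < lam)
    (hPhi : ∀ x : EuclideanSpace ℝ (Fin d), x ≠ 0 → Phi f g p x ≤ -lam)
    (Δ₀ : ℝ) (hΔ₀ : 0 < Δ₀) (h : ℝ → ℝ)
    (hhpos : ∀ Δ ∈ Set.Ioc (0:ℝ) Δ₀, 0 < h Δ)
    (hhdec : AntitoneOn h (Set.Ioc 0 Δ₀))
    (hhinf : Tendsto h (nhdsWithin 0 (Set.Ioc 0 Δ₀)) atTop)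
    (hLh : Tendsto (fun Δ => L (h Δ) ^ 4 * Δ) (nhdsWithin 0 (Set.Ioc 0 Δ₀)) (nhds 0)) :
    ∀ ε ∈ Set.Ioo 0 lam, ∃ Δs ∈ Set.Ioc (0:ℝ) Δ₀, ∀ Δ ∈ Set.Ioo (0:ℝ) Δs,
      ∀ (Ω : Type) [MeasurableSpace Ω] (P : Measure Ω) [IsProbabilityMeasure P]
        (ξ : ℕ → Ω → ℝ), (∀ k, Measurable (ξ k)) →
        iIndepFun (m := fun _ => Real.measurableSpace) ξ P →
        (∀ k, Measure.map (ξ k) P = gaussianReal 0 (Real.toNNReal Δ)) →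
        ∀ (x₀ : EuclideanSpace ℝ (Fin d)) (X : ℕ → Ω → EuclideanSpace ℝ (Fin d)),
        (∀ ω, X 0 ω = x₀) →
        (∀ k ω, X (k + 1) ω
            = X k ω + Δ • trunc f (h Δ) (X k ω) + ξ k ω • trunc g (h Δ) (X k ω)) →
        ∀ k : ℕ,
          (∫⁻ ω, (‖X k ω‖₊ : ℝ≥0∞) ^ p ∂P
              ≤ ENNReal.ofReal (‖x₀‖ ^ p * (1 - p * (lam - ε) * Δ) ^ k)) ∧
          ‖x₀‖ ^ p * (1 - p * (lam - ε) * Δ) ^ k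
              ≤ ‖x₀‖ ^ p * Real.exp (-(p * (lam - ε) * (k * Δ))) := by
  intro ε hε
  have hf : Continuous f := continuous_of_lipschitz_on_balls
    fun R hR x y hx hy => (le_max_left _ _).trans (hlip R hR x y hx hy)
  have hg : Continuous g := continuous_of_lipschitz_on_balls
    fun R hR x y hx hy => (le_max_right _ _).trans (hlip R hR x y hx hy)
  have hgrowth (R : ℝ) (hR : R > 0) (x : EuclideanSpace ℝ (Fin d)) (hx : ‖x‖ ≤ R) :
      ‖f x‖ ⊔ ‖g x‖ ≤ L R * ‖x‖ := by
    simpa [hf0, hg0] using hlip R hR x 0 hx (by simpa using hR.le)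
  exact stmt16_general hf.measurable hg.measurable hgrowth ⟨hp.1, by linarith [hp.2]⟩ hPhi hΔ₀
    hhpos hLh hε.1
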